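/- arXiv:2210.12183 — 3 statements merged into one kernel-verified Lean document; each statement's English description precedes it below -/
import Mathlib

section
/- The (P,w,π)-distance d_{(P,w,π)}(x,y) = w_{(P,w,π)}(x−y) is a metric on 𝔽_q^N; that is, for all x,y,z ∈ 𝔽_q^N: d_{(P,w,π)}(x,y) ≥ 0 with equality iff x = y, d_{(P,w,π)}(x,y) = d_{(P,w,π)}(y,x), and d_{(P,w,π)}(x,y) ≤ d_{(P,w,π)}(x,z) + d_{(P,w,π)}(z,y). -/
open scoped Classical

noncomputable section

variable {F : Type*} [Field F] [Fintype F]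
variable {ι : Type*} [Fintype ι] [PartialOrder ι]

/-- The block weight induced by `w`: the maximum of the weights of the coordinates. -/
def blockWt (w : F → ℕ) {m : ℕ} (v : Fin m → F) : ℕ :=
  Finset.univ.sup fun t => w (v t)

/-- `M_w`, the maximum weight of an element of `F`. -/
def maxWt (w : F → ℕ) : ℕ := Finset.univ.sup w

/-- The order ideal (down-set) of the poset generated by a finite set `A`. -/
def genIdeal (A : Finset ι) : Finset ι := Finset.univ.filter fun i => ∃ j ∈ A, i ≤ j

/-- The set of maximal elements of a finite set `I`. -/
def maxElems (I : Finset ι) : Finset ι := I.filter fun i => ∀ j ∈ I, i ≤ j → j = i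

/-- The π-support of a block vector. -/
def suppPi (k : ι → ℕ) (x : ∀ i, Fin (k i) → F) : Finset ι :=
  Finset.univ.filter fun i => x i ≠ 0

/-- The `(P,w,π)`-weight. -/
def wtP (w : F → ℕ) (k : ι → ℕ) (x : ∀ i, Fin (k i) → F) : ℕ :=
  ∑ i ∈ maxElems (genIdeal (suppPi k x)), blockWt w (x i)
    + maxWt w * ((genIdeal (suppPi k x)) \ maxElems (genIdeal (suppPi k x))).card

/-- The `(P,w,π)`-distance. -/
def dP (w : F → ℕ) (k : ι → ℕ) (x y : ∀ i, Fin (k i) → F) : ℕ := wtP w k (x - y)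

/-!
The weight is a sum of local contributions: coordinate `i` contributes `M_w` if it lies strictly
below some element of the support of `x`, and `w̃ (x i)` otherwise. Since `M_w` bounds every block
weight, each local contribution is symmetric and subadditive in `x`: an element of the support of
`x + y` above `i` is in the support of `x` or of `y`, so one of the two contributions at `i` is
already `M_w`.
-/

section BlockWeight

variable {α : Type*} {w : α → ℕ} {m : ℕ}

theorem blockWt_le_maxWt [Fintype α] (w : α → ℕ) (v : Fin m → α) : blockWt w v ≤ maxWt w :=
  Finset.sup_le fun t _ => Finset.le_sup (Finset.mem_univ (v t))

theorem blockWt_eq_zero_iff [Zero α] (hw : ∀ a, w a = 0 ↔ a = 0) (v : Fin m → α) :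
    blockWt w v = 0 ↔ v = 0 := by
  rw [blockWt, ← Nat.bot_eq_zero, Finset.sup_eq_bot_iff]
  simp [hw, funext_iff]

theorem blockWt_neg [Neg α] (hw : ∀ a, w (-a) = w a) (v : Fin m → α) :
    blockWt w (-v) = blockWt w v :=
  Finset.sup_congr rfl fun t _ => hw (v t)

theorem blockWt_add_le [Add α] (hw : ∀ a b, w (a + b) ≤ w a + w b) (u v : Fin m → α) :
    blockWt w (u + v) ≤ blockWt w u + blockWt w v :=
  Finset.sup_le fun t ht => (hw (u t) (v t)).trans <|
    add_le_add (Finset.le_sup (f := fun t => w (u t)) ht)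
      (Finset.le_sup (f := fun t => w (v t)) ht)

end BlockWeight

theorem mem_genIdeal {A : Finset ι} {i : ι} : i ∈ genIdeal A ↔ ∃ j ∈ A, i ≤ j :=
  Finset.mem_filter_univ i

theorem mem_maxElems_genIdeal {A : Finset ι} {i : ι} :
    i ∈ maxElems (genIdeal A) ↔ i ∈ A ∧ ¬∃ j ∈ A, i < j := by
  simp only [maxElems, Finset.mem_filter, mem_genIdeal]
  constructor
  · rintro ⟨⟨j, hj, hij⟩, hmax⟩
    obtain rfl : j = i := hmax j ⟨j, hj, le_rfl⟩ hij
    exact ⟨hj, fun ⟨l, hl, hjl⟩ => hjl.ne' (hmax l ⟨l, hl, le_rfl⟩ hjl.le)⟩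
  · rintro ⟨hi, hmax⟩
    refine ⟨⟨i, hi, le_rfl⟩, fun j ⟨l, hl, hjl⟩ hij => ?_⟩
    by_contra hne
    exact hmax ⟨l, hl, (hij.lt_of_ne' hne).trans_le hjl⟩

theorem genIdeal_sdiff_maxElems (A : Finset ι) :
    genIdeal A \ maxElems (genIdeal A) = Finset.univ.filter fun i => ∃ j ∈ A, i < j := by
  ext i
  simp only [Finset.mem_sdiff, mem_maxElems_genIdeal, mem_genIdeal, Finset.mem_filter_univ]
  constructor
  · rintro ⟨⟨j, hj, hij⟩, hmax⟩
    rcases hij.eq_or_lt with rfl | hlt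
    · exact not_not.1 fun h => hmax ⟨hj, h⟩
    · exact ⟨j, hj, hlt⟩
  · rintro ⟨j, hj, hij⟩
    exact ⟨⟨j, hj, hij.le⟩, fun h => h.2 ⟨j, hj, hij⟩⟩

section PosetWeight

variable {κ : Type*} [Preorder κ] {G : κ → Type*} {R : Type*}

/-- The contribution of coordinate `i` to the poset weight of `x`: the constant `M` if `i` lies
strictly below the support of `x`, and the weight `N i (x i)` of the coordinate otherwise. -/
def localWt [∀ i, Zero (G i)] (N : ∀ i, G i → R) (M : R) (x : ∀ i, G i) (i : κ) : R :=
  if ∃ j, x j ≠ 0 ∧ i < j then M else N i (x i)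

/-- The poset weight on a product of pointed types `G i` indexed by a preorder, with coordinate
weights `N` and ceiling `M`. The `(P,w,π)`-weight is the case `N i = w̃^{k_i}`, `M = M_w`. -/
def posetWt [Fintype κ] [AddCommMonoid R] [∀ i, Zero (G i)] (N : ∀ i, G i → R) (M : R)
    (x : ∀ i, G i) : R :=
  ∑ i, localWt N M x i

variable {N : ∀ i, G i → R} {M : R}

theorem le_localWt [Preorder R] [∀ i, Zero (G i)] (hM : ∀ i a, N i a ≤ M) (x : ∀ i, G i) (i : κ) :
    N i (x i) ≤ localWt N M x i := by
  unfold localWt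
  split_ifs
  exacts [hM i (x i), le_rfl]

theorem localWt_neg [∀ i, AddGroup (G i)] (hN : ∀ i a, N i (-a) = N i a) (x : ∀ i, G i) (i : κ) :
    localWt N M (-x) i = localWt N M x i := by
  simp only [localWt, Pi.neg_apply, neg_ne_zero, hN]

theorem posetWt_neg [Fintype κ] [AddCommMonoid R] [∀ i, AddGroup (G i)]
    (hN : ∀ i a, N i (-a) = N i a) (x : ∀ i, G i) :
    posetWt N M (-x) = posetWt N M x :=
  Finset.sum_congr rfl fun i _ => localWt_neg hN x i

variable [AddCommMonoid R] [PartialOrder R] [CanonicallyOrderedAdd R]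

theorem localWt_add_le [IsOrderedAddMonoid R] [∀ i, AddZeroClass (G i)] (hM : ∀ i a, N i a ≤ M)
    (hN : ∀ i a b, N i (a + b) ≤ N i a + N i b) (x y : ∀ i, G i) (i : κ) :
    localWt N M (x + y) i ≤ localWt N M x i + localWt N M y i := by
  by_cases hxy : ∃ j, (x + y) j ≠ 0 ∧ i < j
  · have sum_eq : localWt N M (x + y) i = M := if_pos hxy
    obtain ⟨j, hj, hij⟩ := hxy
    rcases ne_or_eq (x j) 0 with hx | hx
    · have left_eq : localWt N M x i = M := if_pos ⟨j, hx, hij⟩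
      exact (sum_eq.trans left_eq.symm).trans_le le_self_add
    · have hy : y j ≠ 0 := by simpa only [Pi.add_apply, hx, zero_add] using hj
      have right_eq : localWt N M y i = M := if_pos ⟨j, hy, hij⟩
      exact (sum_eq.trans right_eq.symm).trans_le le_add_self
  · calc localWt N M (x + y) i = N i (x i + y i) := if_neg hxy
      _ ≤ N i (x i) + N i (y i) := hN i _ _
      _ ≤ localWt N M x i + localWt N M y i :=
        add_le_add (le_localWt hM x i) (le_localWt hM y i)

variable [Fintype κ]

theorem posetWt_eq_zero_iff [∀ i, Zero (G i)] (hM : ∀ i a, N i a ≤ M)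
    (hN : ∀ i a, N i a = 0 ↔ a = 0) (x : ∀ i, G i) : posetWt N M x = 0 ↔ x = 0 := by
  rw [posetWt, Finset.sum_eq_zero_iff]
  constructor
  · intro h
    funext i
    exact (hN i _).1 (nonpos_iff_eq_zero.1 ((le_localWt hM x i).trans_eq (h i (Finset.mem_univ i))))
  · rintro rfl i -
    simp [localWt, hN]

theorem posetWt_add_le [IsOrderedAddMonoid R] [∀ i, AddZeroClass (G i)] (hM : ∀ i a, N i a ≤ M)
    (hN : ∀ i a b, N i (a + b) ≤ N i a + N i b) (x y : ∀ i, G i) :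
    posetWt N M (x + y) ≤ posetWt N M x + posetWt N M y :=
  (Finset.sum_le_sum fun i _ => localWt_add_le hM hN x y i).trans_eq Finset.sum_add_distrib

theorem stmt0_general [IsOrderedAddMonoid R] [∀ i, AddGroup (G i)] (hM : ∀ i a, N i a ≤ M)
    (hN0 : ∀ i a, N i a = 0 ↔ a = 0) (hNneg : ∀ i a, N i (-a) = N i a)
    (hNadd : ∀ i a b, N i (a + b) ≤ N i a + N i b) (x y z : ∀ i, G i) :
    0 ≤ posetWt N M (x - y) ∧ (posetWt N M (x - y) = 0 ↔ x = y) ∧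
      posetWt N M (x - y) = posetWt N M (y - x) ∧
      posetWt N M (x - y) ≤ posetWt N M (x - z) + posetWt N M (z - y) := by
  refine ⟨zero_le, ?_, ?_, ?_⟩
  · rw [posetWt_eq_zero_iff hM hN0, sub_eq_zero]
  · rw [← neg_sub y x, posetWt_neg hNneg]
  · rw [← sub_add_sub_cancel x z y]
    exact posetWt_add_le hM hNadd _ _

end PosetWeight

theorem mem_suppPi {κ K : Type*} [Fintype κ] [Field K] {k : κ → ℕ} {x : ∀ i, Fin (k i) → K}
    {i : κ} : i ∈ suppPi k x ↔ x i ≠ 0 :=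
  Finset.mem_filter_univ i

theorem wtP_eq_posetWt {w : F → ℕ} (hw : w 0 = 0) (k : ι → ℕ) (x : ∀ i, Fin (k i) → F) :
    wtP w k x = posetWt (fun _ => blockWt w) (maxWt w) x := by
  have sum_max : ∑ i ∈ maxElems (genIdeal (suppPi k x)), blockWt w (x i) =
      ∑ i with ¬∃ j ∈ suppPi k x, i < j, blockWt w (x i) := by
    refine Finset.sum_subset (fun i hi => ?_) fun i hi hmax => ?_
    · exact (Finset.mem_filter_univ i).2 (mem_maxElems_genIdeal.1 hi).2
    · have hx : x i = 0 := by
        by_contra hx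
        exact hmax (mem_maxElems_genIdeal.2
          ⟨mem_suppPi.2 hx, (Finset.mem_filter_univ i).1 hi⟩)
      simp [hx, blockWt, hw]
  rw [wtP, genIdeal_sdiff_maxElems, sum_max]
  simp only [posetWt, localWt, ← mem_suppPi, Finset.sum_ite, Finset.sum_const, smul_eq_mul]
  ring

/-- the `(P,w,π)`-distance is a metric on `𝔽_q^N`. -/
theorem stmt0 (w : F → ℕ) (hw0 : ∀ a : F, w a = 0 ↔ a = 0)
    (hwneg : ∀ a : F, w (-a) = w a) (hwadd : ∀ a b : F, w (a + b) ≤ w a + w b)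
    (k : ι → ℕ) (x y z : ∀ i, Fin (k i) → F) :
    0 ≤ dP w k x y ∧ (dP w k x y = 0 ↔ x = y) ∧ dP w k x y = dP w k y x ∧
      dP w k x y ≤ dP w k x z + dP w k z y := by
  simp only [dP, wtP_eq_posetWt ((hw0 0).2 rfl)]
  exact stmt0_general (fun _ => blockWt_le_maxWt w) (fun _ => blockWt_eq_zero_iff hw0)
    (fun _ => blockWt_neg hwneg) (fun _ => blockWt_add_le hwadd) x y z
end
end

section
/- Suppose k_i = 1 for all i ∈ [n] (so N = n and the (P,w,π)-weight is the weighted coordinates poset weight w_{(P,w)}). Then for any 1 ≤ r ≤ n·M_w, the number of u ∈ 𝔽_q^n with w_{(P,w)}(u) = r is |A_r| = Σ_{i=1}^{n} Σ_{j=1}^{i} Σ_{I ∈ 𝓘_j^i} Σ_{(b_1,…,b_j) ∈ PRT_{i−j}[r] having exactly j parts} q^{i−j} · Π_{s=1}^{l} |D_{t_s}|^{r_s} · C(j − (r_1+⋯+r_{s−1}), r_s), where t_1,…,t_l are the distinct values among the parts b_1,…,b_j with multiplicities r_1,…,r_l, r_0 = 0, and C(a,b) is the binomial coefficient. -/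
open scoped Classical

noncomputable section

variable {F : Type*} [Field F] [Fintype F]
variable {ι : Type*} [Fintype ι] [PartialOrder ι]

/-- `D_r = {α ∈ F : w(α) = r}`. -/
def Dset (w : F → ℕ) (r : ℕ) : Finset F := Finset.univ.filter fun a => w a = r

/-- `D_r^k = {v ∈ F^k : w̃^k(v) = r}`. -/
def Dk (w : F → ℕ) (m r : ℕ) : Finset (Fin m → F) :=
  Finset.univ.filter fun v => blockWt w v = r

/-- `I` is an order ideal (down-set) of the poset. -/
def IsIdeal (I : Finset ι) : Prop := ∀ a b : ι, a ≤ b → b ∈ I → a ∈ I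

/-- The collection `𝓘_j^i` of ideals of cardinality `i` with exactly `j` maximal elements. -/
def idealsWithMax (ι : Type*) [Fintype ι] [PartialOrder ι] (j i : ℕ) : Finset (Finset ι) :=
  Finset.univ.filter fun I => IsIdeal I ∧ I.card = i ∧ (maxElems I).card = j

/-- The support of a vector. -/
def suppV (v : ι → F) : Finset ι := Finset.univ.filter fun i => v i ≠ 0

/-- The `(P,w)`-weight (the case where all blocks have dimension 1). -/
def wtPw (w : F → ℕ) (v : ι → F) : ℕ :=
  ∑ i ∈ maxElems (genIdeal (suppV v)), w (v i)
    + maxWt w * ((genIdeal (suppV v)) \ maxElems (genIdeal (suppV v))).card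

/-- `PRT_m[r]` restricted to partitions with exactly `j` parts: partitions of `r - m·M_w`
into parts each in `{1,…,R}`, with between `1` and `n - m` parts, and exactly `j` parts. -/
def PRTparts (n R m r j : ℕ) : Finset (Nat.Partition (r - m * R)) :=
  Finset.univ.filter fun p => p.parts.card = j ∧ (∀ x ∈ p.parts, x ≤ R) ∧
    1 ≤ p.parts.card ∧ p.parts.card ≤ n - m

/-!
The weight of `u` depends only on the ideal `I` generated by its support and on the multiset `p` of
the weights of the coordinates of `u` on `Max I`; it equals `r` exactly when `p` is a partition of
`r - M * |I \ Max I|`. For fixed `I` and `p`, the `j` coordinates on `Max I` can be chosen in as many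
ways as the coefficient of the monomial `p` in `(∑ a, X_{w a}) ^ j`, which the multinomial theorem
evaluates, and the coordinates on `I \ Max I` are free. A multinomial coefficient splits into
binomial ones by choosing the positions of the largest value first.
-/

section Counting

open Finset

variable {α β κ : Type*}

theorem multinomial_eq_prod_choose [LinearOrder β] (s : Finset β) (f : β → ℕ) :
    Nat.multinomial s f = ∏ t ∈ s, (∑ x ∈ s with x ≤ t, f x).choose (f t) := by
  induction s using Finset.induction_on_max with
  | empty => simp
  | insert a s ha ih =>
    have has : a ∉ s := fun h ↦ (ha a h).false
    have hle : ∀ x ∈ insert a s, x ≤ a := fun x hx ↦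
      (mem_insert.1 hx).elim le_of_eq fun h ↦ (ha x h).le
    rw [Nat.multinomial_insert has, prod_insert has, ih, filter_true_of_mem hle, sum_insert has]
    congr 1
    refine prod_congr rfl fun t ht ↦ ?_
    rw [filter_insert, if_neg (ha t ht).not_ge]

theorem countP_eq_sum_count [DecidableEq β] (p : Multiset β) (P : β → Prop) [DecidablePred P] :
    p.countP P = ∑ x ∈ p.toFinset with P x, p.count x := by
  rw [Multiset.countP_eq_card_filter, ← Multiset.toFinset_sum_count_eq, Multiset.toFinset_filter]
  exact sum_congr rfl fun x hx ↦ Multiset.count_filter_of_pos (mem_filter.1 hx).2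

theorem countPerms_eq_prod_choose [LinearOrder β] (p : Multiset β) :
    p.countPerms = ∏ t ∈ p.toFinset, (p.card - p.countP (t < ·)).choose (p.count t) := by
  refine (multinomial_eq_prod_choose p.toFinset fun t ↦ p.count t).trans
    (prod_congr rfl fun t _ ↦ ?_)
  have hcard := Multiset.card_eq_countP_add_countP (t < ·) p
  simp only [not_lt] at hcard
  rw [hcard, Nat.add_sub_cancel_left, countP_eq_sum_count]

theorem sum_X_pow_card_eq_sum_monomial (R : Type*) [CommSemiring R] [DecidableEq β] [Fintype α]
    [Fintype κ] [DecidableEq κ] (w : α → β) :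
    (∑ a, MvPolynomial.X (R := R) (w a)) ^ Fintype.card κ =
      ∑ v : κ → α, MvPolynomial.monomial (univ.val.map fun i ↦ w (v i)).toFinsupp 1 := by
  rw [← card_univ, ← prod_const, prod_univ_sum, Fintype.piFinset_univ]
  refine sum_congr rfl fun v _ ↦ ?_
  have hsum : (univ.val.map fun i ↦ w (v i)) = ∑ i, {w (v i)} := by
    rw [← Multiset.sum_map_singleton (univ.val.map _), Multiset.map_map]
    rfl
  simp only [hsum, map_sum, Multiset.toFinsupp_singleton, MvPolynomial.monomial_sum_one,
    MvPolynomial.X]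

theorem card_filter_map_eq [DecidableEq β] [Fintype α] [Fintype κ] [DecidableEq κ] (w : α → β)
    {p : Multiset β} (hp : p.card = Fintype.card κ) :
    #{v : κ → α | univ.val.map (fun i ↦ w (v i)) = p} =
      p.countPerms * ∏ t ∈ p.toFinset, #{a | w a = t} ^ p.count t := by
  let valueCount : β →₀ ℕ := ∑ a, Finsupp.single (w a) 1
  have hvalueCount (t : β) : valueCount t = #{a | w a = t} := by
    simp [valueCount, Finsupp.single_apply]
  have hlin : valueCount.linearCombination ℕ (MvPolynomial.X (R := ℕ)) =
      ∑ a, MvPolynomial.X (w a) := by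
    simp [valueCount, map_sum]
  have hdegree : (p.toFinsupp.sum fun _ m ↦ m) = Fintype.card κ :=
    (Multiset.toFinsupp_sum_eq p).trans hp
  have hcoeff := MvPolynomial.coeff_linearCombination_X_pow valueCount p.toFinsupp (Fintype.card κ)
  rw [hlin, sum_X_pow_card_eq_sum_monomial, if_pos hdegree, MvPolynomial.coeff_sum] at hcoeff
  simpa [MvPolynomial.coeff_monomial, hvalueCount, Multiset.countPerms, Finsupp.prod] using hcoeff

theorem card_filter_restrict_eq [Fintype α] [Zero α] [Fintype κ] {I T : Finset κ} (hTI : T ⊆ I)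
    (v : T → α) :
    #{u : κ → α | (∀ i ∉ I, u i = 0) ∧ T.restrict u = v} = Fintype.card α ^ (#I - #T) := by
  let choices (i : κ) : Finset α :=
    if h : i ∈ T then {v ⟨i, h⟩} else if i ∈ I then univ else {0}
  have hpi : ({u | (∀ i ∉ I, u i = 0) ∧ T.restrict u = v} : Finset (κ → α)) =
      Fintype.piFinset choices := by
    ext u
    simp only [mem_filter, mem_univ, true_and, Fintype.mem_piFinset, choices, funext_iff]
    constructor
    · rintro ⟨hoff, hon⟩ i
      split_ifs with hT hI
      · exact mem_singleton.2 (hon ⟨i, hT⟩)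
      · exact mem_univ _
      · exact mem_singleton.2 (hoff i hI)
    · intro h
      refine ⟨fun i hI ↦ ?_, fun i ↦ ?_⟩
      · simpa [hI, mt (@hTI i) hI] using h i
      · simpa using h i
  have hcard (i : κ) : #(choices i) = if i ∈ I \ T then Fintype.card α else 1 := by
    by_cases hT : i ∈ T <;> by_cases hI : i ∈ I <;> simp [choices, hT, hI]
  rw [hpi, Fintype.card_piFinset]
  simp only [hcard, prod_ite_mem, univ_inter, prod_const, card_sdiff_of_subset hTI]

theorem card_filter_zero_off_map_eq [DecidableEq β] [Fintype α] [Zero α] [Fintype κ] (w : α → β)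
    {I T : Finset κ} (hTI : T ⊆ I) {p : Multiset β} (hp : p.card = #T) :
    #{u : κ → α | (∀ i ∉ I, u i = 0) ∧ T.val.map (fun i ↦ w (u i)) = p} =
      Fintype.card α ^ (#I - #T) *
        (p.countPerms * ∏ t ∈ p.toFinset, #{a | w a = t} ^ p.count t) := by
  have hrestrict (u : κ → α) :
      T.val.map (fun i ↦ w (u i)) = univ.val.map fun i ↦ w (T.restrict u i) :=
    (Multiset.attach_map_val' T.val fun i ↦ w (u i)).symm
  rw [← card_filter_map_eq w (hp.trans (Fintype.card_coe T).symm), mul_comm,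
    card_eq_sum_card_fiberwise (f := T.restrict) (t := {v | univ.val.map (fun i ↦ w (v i)) = p})]
  swap
  · intro u hu
    rw [mem_coe, mem_filter] at hu ⊢
    exact ⟨mem_univ _, (hrestrict u).symm.trans hu.2.2⟩
  refine sum_const_nat fun v hv ↦ ?_
  rw [← card_filter_restrict_eq hTI v, filter_filter]
  congr 1 with u
  simp only [mem_filter, mem_univ, true_and] at hv ⊢
  rw [hrestrict]
  exact ⟨fun h ↦ ⟨h.1.1, h.2⟩, fun h ↦ ⟨⟨h.1, h.2 ▸ hv⟩, h.2⟩⟩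

end Counting

section Ideals

open Finset

theorem isIdeal_genIdeal (A : Finset ι) : IsIdeal (genIdeal A) := by
  intro a b hab hb
  obtain ⟨j, hj, hbj⟩ := (mem_filter.1 hb).2
  exact mem_filter.2 ⟨mem_univ _, j, hj, hab.trans hbj⟩

theorem subset_genIdeal (A : Finset ι) : A ⊆ genIdeal A :=
  fun i hi ↦ mem_filter.2 ⟨mem_univ i, i, hi, le_rfl⟩

theorem mem_maxElems_iff_maximal {I : Finset ι} {i : ι} :
    i ∈ maxElems I ↔ Maximal (· ∈ I) i :=
  mem_filter.trans <| and_congr_right fun _ ↦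
    forall₂_congr fun _ _ ↦ forall_congr' fun hij ↦ ⟨Eq.le, fun hji ↦ le_antisymm hji hij⟩

theorem maxElems_subset (I : Finset ι) : maxElems I ⊆ I :=
  filter_subset _ _

theorem maxElems_nonempty {I : Finset ι} (hI : I.Nonempty) : (maxElems I).Nonempty := by
  obtain ⟨i, hi⟩ := I.exists_maximal hI
  exact ⟨i, mem_maxElems_iff_maximal.2 hi⟩

theorem maxElems_genIdeal_subset (A : Finset ι) : maxElems (genIdeal A) ⊆ A := by
  intro i hi
  have hmax := mem_maxElems_iff_maximal.1 hi
  obtain ⟨j, hj, hij⟩ := (mem_filter.1 hmax.prop).2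
  rwa [hmax.eq_of_le (subset_genIdeal A hj) hij]

theorem genIdeal_eq_iff {A I : Finset ι} (hI : IsIdeal I) :
    genIdeal A = I ↔ A ⊆ I ∧ maxElems I ⊆ A := by
  refine ⟨?_, fun ⟨hAI, hIA⟩ ↦ Subset.antisymm ?_ ?_⟩
  · rintro rfl
    exact ⟨subset_genIdeal A, maxElems_genIdeal_subset A⟩
  · intro i hi
    obtain ⟨j, hj, hij⟩ := (mem_filter.1 hi).2
    exact hI i j hij (hAI hj)
  · intro i hi
    obtain ⟨j, hij, hj⟩ := I.exists_le_maximal hi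
    exact mem_filter.2 ⟨mem_univ i, j, hIA (mem_maxElems_iff_maximal.2 hj), hij⟩

theorem sum_idealsWithMax {A : Type*} [AddCommMonoid A] (f : ℕ → ℕ → Finset ι → A) :
    ∑ i ∈ Icc 1 (Fintype.card ι), ∑ j ∈ Icc 1 i, ∑ I ∈ idealsWithMax ι j i, f i j I =
      ∑ I with IsIdeal I ∧ I.Nonempty, f #I #(maxElems I) I := by
  set ideals : Finset (Finset ι) := {I | IsIdeal I ∧ I.Nonempty} with hideals
  have hcard (I) (hI : I ∈ ideals) : #I ∈ Icc 1 (Fintype.card ι) :=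
    mem_Icc.2 ⟨(mem_filter.1 hI).2.2.card_pos, card_le_univ I⟩
  have hcardMax (i I) (hI : I ∈ ideals.filter (#· = i)) : #(maxElems I) ∈ Icc 1 i := by
    obtain ⟨hideal, rfl⟩ := mem_filter.1 hI
    exact mem_Icc.2 ⟨(maxElems_nonempty (mem_filter.1 hideal).2.2).card_pos,
      card_le_card (maxElems_subset I)⟩
  have hfiber (i j) (hi : 1 ≤ i) :
      idealsWithMax ι j i = {I ∈ {I ∈ ideals | #I = i} | #(maxElems I) = j} := by
    ext I
    simp only [idealsWithMax, hideals, mem_filter, mem_univ, true_and]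
    have hpos : #I = i → I.Nonempty := fun h ↦ card_pos.1 (h ▸ hi)
    tauto
  rw [← sum_fiberwise_of_maps_to hcard]
  refine sum_congr rfl fun i hi ↦ ?_
  rw [← sum_fiberwise_of_maps_to (hcardMax i)]
  refine sum_congr rfl fun j _ ↦ sum_congr (hfiber i j (mem_Icc.1 hi).1) fun I hI ↦ ?_
  rw [(mem_filter.1 (mem_filter.1 hI).1).2, (mem_filter.1 hI).2]

end Ideals

section Weight

open Finset

variable {α : Type*} [Zero α] {w : α → ℕ} {M r : ℕ} {I : Finset ι}

/-- The order ideal generated by the support of `u`, for coordinates in any type with a zero. -/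
def supportIdeal (u : ι → α) : Finset ι :=
  genIdeal {i | u i ≠ 0}

/-- The weighted coordinates poset weight `wtPw` for coordinates in any type with a zero, where the
weight `M` of a non-maximal coordinate is a parameter instead of the maximum of `w`. -/
def posetWeight (w : α → ℕ) (M : ℕ) (u : ι → α) : ℕ :=
  ∑ i ∈ maxElems (supportIdeal u), w (u i) + M * #(supportIdeal u \ maxElems (supportIdeal u))

theorem supportIdeal_eq_iff (hI : IsIdeal I) {u : ι → α} :
    supportIdeal u = I ↔ (∀ i ∉ I, u i = 0) ∧ ∀ i ∈ maxElems I, u i ≠ 0 := by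
  simp only [supportIdeal, genIdeal_eq_iff hI, subset_iff, mem_filter, mem_univ, true_and,
    ne_eq, not_imp_comm]

theorem supportIdeal_nonempty_of_posetWeight_ne_zero {u : ι → α} (hu : posetWeight w M u ≠ 0) :
    (supportIdeal u).Nonempty := by
  rw [nonempty_iff_ne_empty]
  intro hempty
  simp [posetWeight, hempty, maxElems] at hu

theorem posetWeight_eq_sum_map_add {u : ι → α} (hu : supportIdeal u = I) :
    posetWeight w M u =
      ((maxElems I).val.map fun i ↦ w (u i)).sum + (#I - #(maxElems I)) * M := by
  rw [posetWeight, hu, card_sdiff_of_subset (maxElems_subset I), mul_comm]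
  rfl

-- Positivity of the sum of a nonempty `s` rules out truncation in `r - m * M`.
theorem exists_mem_PRTparts_parts_eq_iff {n m j : ℕ} {s : Multiset ℕ} (hs : s ≠ 0) :
    (∃ p ∈ PRTparts n M m r j, p.parts = s) ↔
      s.card = j ∧ j ≤ n - m ∧ (∀ x ∈ s, 0 < x ∧ x ≤ M) ∧ s.sum + m * M = r := by
  constructor
  · rintro ⟨p, hp, rfl⟩
    obtain ⟨rfl, hle, -, hcard⟩ := (mem_filter.1 hp).2
    obtain ⟨x, hx⟩ := Multiset.exists_mem_of_ne_zero hs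
    have hpos : 0 < p.parts.sum := (p.parts_pos hx).trans_le (Multiset.le_sum_of_mem hx)
    have hsum := p.parts_sum
    exact ⟨rfl, hcard, fun y hy ↦ ⟨p.parts_pos hy, hle y hy⟩, by omega⟩
  · rintro ⟨rfl, hcard, hle, hsum⟩
    exact ⟨⟨s, fun hx ↦ (hle _ hx).1, by omega⟩, mem_filter.2
      ⟨mem_univ _, rfl, fun x hx ↦ (hle x hx).2, Multiset.card_pos.2 hs, hcard⟩, rfl⟩

theorem posetWeight_eq_and_supportIdeal_eq_iff (hw0 : ∀ a, w a = 0 ↔ a = 0) (hM : ∀ a, w a ≤ M)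
    (hI : IsIdeal I) (hne : I.Nonempty) {u : ι → α} :
    posetWeight w M u = r ∧ supportIdeal u = I ↔
      ∃ p ∈ PRTparts (Fintype.card ι) M (#I - #(maxElems I)) r #(maxElems I),
        (∀ i ∉ I, u i = 0) ∧ (maxElems I).val.map (fun i ↦ w (u i)) = p.parts := by
  set s := (maxElems I).val.map fun i ↦ w (u i) with hs
  have hs0 : s ≠ 0 := by
    simpa [hs] using (maxElems_nonempty hne).ne_empty
  have hle : #(maxElems I) ≤ Fintype.card ι - (#I - #(maxElems I)) := by
    have hmax := card_le_card (maxElems_subset I)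
    have huniv := card_le_univ I
    omega
  have hparts : (∃ p ∈ PRTparts (Fintype.card ι) M (#I - #(maxElems I)) r #(maxElems I),
      p.parts = s) ↔ (∀ i ∈ maxElems I, u i ≠ 0) ∧ s.sum + (#I - #(maxElems I)) * M = r := by
    rw [exists_mem_PRTparts_parts_eq_iff hs0]
    simp [hle, hs, hM, Nat.pos_iff_ne_zero, hw0]
  calc posetWeight w M u = r ∧ supportIdeal u = I
      ↔ s.sum + (#I - #(maxElems I)) * M = r ∧ supportIdeal u = I :=
        and_congr_left fun hu ↦ by rw [posetWeight_eq_sum_map_add hu]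
    _ ↔ (∀ i ∉ I, u i = 0) ∧ (∀ i ∈ maxElems I, u i ≠ 0) ∧
          s.sum + (#I - #(maxElems I)) * M = r := by
        rw [supportIdeal_eq_iff hI, and_comm, and_assoc]
    _ ↔ _ := by
        rw [← hparts]
        simp only [eq_comm (a := s)]
        tauto

theorem card_filter_posetWeight_eq_and_supportIdeal_eq [Fintype α] (hw0 : ∀ a, w a = 0 ↔ a = 0)
    (hM : ∀ a, w a ≤ M) (hI : IsIdeal I) (hne : I.Nonempty) :
    #{u : ι → α | posetWeight w M u = r ∧ supportIdeal u = I} =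
      ∑ p ∈ PRTparts (Fintype.card ι) M (#I - #(maxElems I)) r #(maxElems I),
        Fintype.card α ^ (#I - #(maxElems I)) *
          ∏ t ∈ p.parts.toFinset, #{a | w a = t} ^ p.parts.count t *
            (#(maxElems I) - p.parts.countP (t < ·)).choose (p.parts.count t) := by
  have hunion : ({u | posetWeight w M u = r ∧ supportIdeal u = I} : Finset (ι → α)) =
      (PRTparts (Fintype.card ι) M (#I - #(maxElems I)) r #(maxElems I)).biUnion fun p ↦
        {u | (∀ i ∉ I, u i = 0) ∧ (maxElems I).val.map (fun i ↦ w (u i)) = p.parts} := by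
    ext u
    simp [posetWeight_eq_and_supportIdeal_eq_iff hw0 hM hI hne]
  rw [hunion, card_biUnion]
  · refine sum_congr rfl fun p hp ↦ ?_
    have hcard : p.parts.card = #(maxElems I) := (mem_filter.1 hp).2.1
    rw [card_filter_zero_off_map_eq w (maxElems_subset I) hcard, countPerms_eq_prod_choose,
      hcard, mul_comm (∏ t ∈ _, _), prod_mul_distrib]
  · intro p _ p' _ hpp'
    refine disjoint_left.2 fun u hu hu' ↦ hpp' (Nat.Partition.ext ?_)
    exact (mem_filter.1 hu).2.2.symm.trans (mem_filter.1 hu').2.2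

theorem stmt7_general [Fintype α] (w : α → ℕ) (hw0 : ∀ a, w a = 0 ↔ a = 0)
    (hM : ∀ a, w a ≤ M) (hr : 1 ≤ r) :
    #{u : ι → α | posetWeight w M u = r} =
      ∑ i ∈ Icc 1 (Fintype.card ι), ∑ j ∈ Icc 1 i, ∑ _I ∈ idealsWithMax ι j i,
        ∑ p ∈ PRTparts (Fintype.card ι) M (i - j) r j,
          Fintype.card α ^ (i - j) *
            ∏ t ∈ p.parts.toFinset, #{a | w a = t} ^ p.parts.count t *
              (j - p.parts.countP (t < ·)).choose (p.parts.count t) := by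
  rw [sum_idealsWithMax,
    card_eq_sum_card_fiberwise (f := supportIdeal) (t := {I | IsIdeal I ∧ I.Nonempty})]
  · refine sum_congr rfl fun I hI ↦ ?_
    obtain ⟨hideal, hne⟩ := (mem_filter.1 hI).2
    rw [filter_filter, card_filter_posetWeight_eq_and_supportIdeal_eq hw0 hM hideal hne]
  · intro u hu
    have hwt : posetWeight w M u = r := (mem_filter.1 hu).2
    exact mem_filter.2 ⟨mem_univ _, isIdeal_genIdeal _,
      supportIdeal_nonempty_of_posetWeight_ne_zero (hwt ▸ (Nat.one_le_iff_ne_zero.1 hr))⟩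

end Weight

/-- the weight distribution of the `(P,w)`-space (all blocks of dimension 1),
expressed via partitions, the multiplicities `r_s` of their distinct parts `t_s`, and the
binomial coefficients `C(j - (r_1 + ⋯ + r_{s-1}), r_s)`. -/
theorem stmt7 (w : F → ℕ) (hw0 : ∀ a : F, w a = 0 ↔ a = 0)
    (hwneg : ∀ a : F, w (-a) = w a) (hwadd : ∀ a b : F, w (a + b) ≤ w a + w b)
    (r : ℕ) (hr1 : 1 ≤ r) (hr2 : r ≤ Fintype.card ι * maxWt w) :
    (Finset.univ.filter fun u : ι → F => wtPw w u = r).card =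
      ∑ i ∈ Finset.Icc 1 (Fintype.card ι), ∑ j ∈ Finset.Icc 1 i,
        ∑ I ∈ idealsWithMax ι j i,
          ∑ p ∈ PRTparts (Fintype.card ι) (maxWt w) (i - j) r j,
            Fintype.card F ^ (i - j) *
              ∏ t ∈ p.parts.toFinset,
                (Dset w t).card ^ p.parts.count t *
                  Nat.choose (j - Multiset.countP (fun x => t < x) p.parts)
                    (p.parts.count t) :=
  stmt7_general w hw0 (fun _ ↦ Finset.le_sup (Finset.mem_univ _)) hr1
end
end

section
/- Suppose k_i = 1 for all i ∈ [n] and P = ([n],⪯) is a chain 1 ⪯ 2 ⪯ ⋯ ⪯ n. Then: (i) for 1 ≤ r ≤ M_w, the number of v ∈ 𝔽_q^n with w_{(P,w)}(v) = r equals |D_r|; (ii) for r = t·M_w + k with 0 < k ≤ M_w and 1 ≤ t ≤ n−1, the number of v ∈ 𝔽_q^n with w_{(P,w)}(v) = r equals q^t·|D_k|. -/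
open scoped Classical

noncomputable section

variable {F : Type*} [Field F] [Fintype F]
variable {ι : Type*} [Fintype ι] [PartialOrder ι]

/-!
If `m` is the last nonzero position of `v`, then `supp v` generates the ideal of all `i ≤ m`, whose
only maximal element is `m`; hence `v` has weight `t * M + w (v m)`, where `t` is the number of
positions before `m` and `M = maxWt w`. Since `0 < w (v m) ≤ M`, the weight determines both `t` and
`w (v m)`: the vectors of weight `t * M + k` are those that are arbitrary before the position `m` of
rank `t`, take a value of weight `k` at `m`, and vanish after it.
-/

section PartialOrder

open Finset

theorem genIdeal_eq_Iic [LocallyFiniteOrderBot ι] {A : Finset ι} {m : ι}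
    (hm : IsGreatest (A : Set ι) m) : genIdeal A = Iic m := by
  ext i
  simp only [genIdeal, mem_filter_univ, mem_Iic]
  exact ⟨fun ⟨j, hj, hij⟩ => hij.trans (hm.2 hj), fun him => ⟨m, hm.1, him⟩⟩

theorem maxElems_eq_singleton {I : Finset ι} {m : ι} (hm : IsGreatest (I : Set ι) m) :
    maxElems I = {m} := by
  ext i
  simp only [maxElems, mem_filter, mem_singleton]
  constructor
  · rintro ⟨hi, hmax⟩
    exact (hmax m hm.1 (hm.2 hi)).symm
  · rintro rfl
    exact ⟨hm.1, fun j hj hij => (hm.2 hj).antisymm hij⟩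

theorem wtPw_of_isGreatest [LocallyFiniteOrderBot ι] (w : F → ℕ) {v : ι → F} {m : ι}
    (hm : IsGreatest (suppV v : Set ι) m) :
    wtPw w v = #(Iio m) * maxWt w + w (v m) := by
  have hmax : maxElems (Iic m) = {m} :=
    maxElems_eq_singleton (by simpa only [coe_Iic] using isGreatest_Iic)
  rw [wtPw, genIdeal_eq_Iic hm, hmax, sum_singleton, sdiff_singleton_eq_erase, Iic_erase]
  ring

omit [Fintype F] [PartialOrder ι] in
theorem suppV_eq_empty_iff {v : ι → F} : suppV v = ∅ ↔ v = 0 := by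
  simp [suppV, filter_eq_empty_iff, funext_iff]

theorem wtPw_zero (w : F → ℕ) : wtPw w (0 : ι → F) = 0 := by
  simp [wtPw, suppV_eq_empty_iff.2, genIdeal, maxElems]

omit [Field F] in
theorem le_maxWt (w : F → ℕ) (a : F) : w a ≤ maxWt w :=
  le_sup (f := w) (mem_univ a)

end PartialOrder

theorem eq_and_eq_of_mul_add_eq_mul_add {M a b r s : ℕ} (hr : 0 < r) (hrM : r ≤ M) (hs : 0 < s)
    (hsM : s ≤ M) (h : a * M + r = b * M + s) : a = b ∧ r = s := by
  obtain hab | rfl | hba := lt_trichotomy a b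
  · have : (a + 1) * M ≤ b * M := Nat.mul_le_mul_right M hab
    linarith
  · exact ⟨rfl, Nat.add_left_cancel h⟩
  · have : (b + 1) * M ≤ a * M := Nat.mul_le_mul_right M hba
    linarith

section LinearOrder

open Finset

variable {α : Type*} [Fintype α] [LinearOrder α] [LocallyFiniteOrderBot α]

omit [Fintype α] in
theorem card_Iio_injective : Function.Injective fun i : α => #(Iio i) :=
  StrictMono.injective fun _ _ hij => card_lt_card (Iio_ssubset_Iio hij)

omit [Fintype F] [LocallyFiniteOrderBot α] in
theorem isGreatest_suppV_iff {v : α → F} {i : α} :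
    IsGreatest (suppV v : Set α) i ↔ v i ≠ 0 ∧ ∀ j, i < j → v j = 0 := by
  simp only [IsGreatest, mem_upperBounds, mem_coe, suppV, mem_filter_univ]
  refine and_congr_right fun _ => forall_congr' fun j => ?_
  rw [not_imp_comm, not_le]

theorem wtPw_eq_iff {w : F → ℕ} (hw0 : ∀ a : F, w a = 0 ↔ a = 0) {v : α → F} {i : α} {k : ℕ}
    (hk : 0 < k) (hkM : k ≤ maxWt w) :
    wtPw w v = #(Iio i) * maxWt w + k ↔ w (v i) = k ∧ ∀ j, i < j → v j = 0 := by
  constructor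
  · intro hv
    have hne : (suppV v).Nonempty := by
      rw [nonempty_iff_ne_empty, Ne, suppV_eq_empty_iff]
      rintro rfl
      rw [wtPw_zero] at hv
      omega
    obtain ⟨m, hm⟩ : ∃ m, IsGreatest (suppV v : Set α) m := ⟨_, isGreatest_max' _ hne⟩
    obtain ⟨hvm, htop⟩ := isGreatest_suppV_iff.1 hm
    have hpos : 0 < w (v m) := Nat.pos_of_ne_zero fun h => hvm ((hw0 _).1 h)
    rw [wtPw_of_isGreatest w hm] at hv
    obtain ⟨hcard, hwm⟩ := eq_and_eq_of_mul_add_eq_mul_add hpos (le_maxWt w _) hk hkM hv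
    obtain rfl : m = i := card_Iio_injective hcard
    exact ⟨hwm, htop⟩
  · rintro ⟨rfl, htop⟩
    have hvi : v i ≠ 0 := fun h => hk.ne' ((hw0 _).2 h)
    exact wtPw_of_isGreatest w (isGreatest_suppV_iff.2 ⟨hvi, htop⟩)

theorem card_filter_apply_mem_and_eq_zero_of_gt {R : Type*} [Fintype R] [Zero R] (S : Finset R)
    (i : α) :
    #{v : α → R | v i ∈ S ∧ ∀ j, i < j → v j = 0} = Fintype.card R ^ #(Iio i) * #S := by
  have hpi : ({v : α → R | v i ∈ S ∧ ∀ j, i < j → v j = 0} : Finset (α → R)) =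
      Fintype.piFinset fun j => if j < i then univ else if j = i then S else {0} := by
    ext v
    simp only [mem_filter_univ, Fintype.mem_piFinset]
    constructor
    · rintro ⟨hi, htop⟩ j
      rcases lt_trichotomy j i with hlt | rfl | hgt
      · simp [hlt]
      · simpa using hi
      · simp [hgt.not_gt, hgt.ne', htop j hgt]
    · intro h
      exact ⟨by simpa using h i, fun j hj => by simpa [hj.not_gt, hj.ne'] using h j⟩
  simp_rw [hpi, Fintype.card_piFinset, apply_ite card]
  rw [prod_ite, prod_const, filter_gt_eq_Iio]
  simp

theorem stmt8_general {w : F → ℕ} (hw0 : ∀ a : F, w a = 0 ↔ a = 0) (i : α) {k : ℕ}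
    (hk : 0 < k) (hkM : k ≤ maxWt w) :
    #{v : α → F | wtPw w v = #(Iio i) * maxWt w + k} =
      Fintype.card F ^ #(Iio i) * #(Dset w k) := by
  simpa only [wtPw_eq_iff hw0 hk hkM, Dset, mem_filter_univ] using
    card_filter_apply_mem_and_eq_zero_of_gt (Dset w k) i

end LinearOrder

/-- the weight distribution of the `(P,w)`-space when `P` is the chain
`1 ⪯ 2 ⪯ ⋯ ⪯ n` (modelled as `Fin n` with its natural order). -/
theorem stmt8 (n : ℕ) (hn : 1 ≤ n) (w : F → ℕ) (hw0 : ∀ a : F, w a = 0 ↔ a = 0)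
    (hwneg : ∀ a : F, w (-a) = w a) (hwadd : ∀ a b : F, w (a + b) ≤ w a + w b) :
    (∀ r : ℕ, 1 ≤ r → r ≤ maxWt w →
      (Finset.univ.filter fun v : Fin n → F => wtPw w v = r).card = (Dset w r).card) ∧
    (∀ t k : ℕ, 0 < k → k ≤ maxWt w → 1 ≤ t → t ≤ n - 1 →
      (Finset.univ.filter fun v : Fin n → F => wtPw w v = t * maxWt w + k).card =
        Fintype.card F ^ t * (Dset w k).card) := by
  exact ⟨fun r hr hrM => by simpa using stmt8_general hw0 (⟨0, hn⟩ : Fin n) hr hrM,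
    fun t k hk hkM _ ht => by simpa using stmt8_general hw0 (⟨t, by omega⟩ : Fin n) hk hkM⟩
end
end
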